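/- Let s₀,…,s_{k−1} ∈ ℝⁿ be nonzero vectors, let S = [s₀ ⋯ s_{k−1}] be the n×k matrix with these columns, and let U be the (non-strictly) upper triangular part of SᵀS, which is invertible since its diagonal entries sᵢᵀsᵢ are positive. Define the projections Vᵢ := I − sᵢsᵢᵀ/(sᵢᵀsᵢ). Then the product V₀ V₁ ⋯ V_{k−1} equals I − S U⁻¹ Sᵀ. -/

import Mathlib

open Matrix

/-- The (non-strictly) upper triangular part of a square matrix. -/
def upperTriPart {m : ℕ} (M : Matrix (Fin m) (Fin m) ℝ) : Matrix (Fin m) (Fin m) ℝ :=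
  Matrix.of fun i j => if i ≤ j then M i j else 0

theorem proj_aux (n : ℕ) : ∀ (k : ℕ) (s : Fin k → (Fin n → ℝ)) (_ : ∀ i, s i ≠ 0)
    (V : Fin k → Matrix (Fin n) (Fin n) ℝ)
    (_ : ∀ i, V i = 1 - (s i ⬝ᵥ s i)⁻¹ • vecMulVec (s i) (s i)),
    ∃ x : Fin k → (Fin n → ℝ),
      (List.ofFn V).prod = 1 - ∑ j, vecMulVec (s j) (x j) ∧
      ∀ i, ∑ j, (if i ≤ j then s i ⬝ᵥ s j else 0) • x j = s i := by
  intro k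
  induction k with
  | zero =>
    intro s _ V _
    exact ⟨fun i => i.elim0, by simp, fun i => i.elim0⟩
  | succ k ih =>
    intro s hs V hV
    obtain ⟨x, hP, hx⟩ := ih (fun i => s i.succ) (fun i => hs _) (fun i => V i.succ)
      (fun i => hV _)
    have hd : s 0 ⬝ᵥ s 0 ≠ 0 := by
      intro h
      exact hs 0 (dotProduct_self_eq_zero.mp h)
    set P := (List.ofFn fun i : Fin k => V i.succ).prod with hPdef
    refine ⟨Fin.cons ((s 0 ⬝ᵥ s 0)⁻¹ • (s 0 ᵥ* P)) x, ?_, ?_⟩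
    · rw [List.ofFn_succ, List.prod_cons, ← hPdef, hV 0, Fin.sum_univ_succ]
      simp only [Fin.cons_zero, Fin.cons_succ]
      rw [sub_mul, one_mul, smul_mul_assoc, vecMulVec_mul, vecMulVec_smul]
      rw [sub_add_eq_sub_sub_swap, ← hP]
    · intro i
      rw [Fin.sum_univ_succ]
      refine Fin.cases ?_ (fun i => ?_) i
      · simp only [Fin.cons_zero, Fin.cons_succ, Fin.zero_le, if_true]
        rw [smul_smul, mul_inv_cancel₀ hd, one_smul, hP, vecMul_sub, vecMul_one]
        have : s 0 ᵥ* (∑ j, vecMulVec (s j.succ) (x j)) =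
            ∑ j : Fin k, (s 0 ⬝ᵥ s j.succ) • x j := by
          rw [vecMul_sum]
          refine Finset.sum_congr rfl fun j _ => ?_
          rw [vecMul_vecMulVec]
        rw [this, sub_add_cancel]
      · have h0 : ¬ (i.succ ≤ (0 : Fin (k+1))) := by simp [Fin.le_def]
        simp only [Fin.cons_zero, Fin.cons_succ, h0, if_false, zero_smul, zero_add,
          Fin.succ_le_succ_iff]
        exact hx i

/-- for nonzero vectors `s₀, …, s_{k−1}` with `S = [s₀ ⋯ s_{k−1}]` and
`U` the upper triangular part of `SᵀS` (invertible), the product of the projections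
`Vᵢ = I − sᵢsᵢᵀ/(sᵢᵀsᵢ)` satisfies `V₀ V₁ ⋯ V_{k−1} = I − S U⁻¹ Sᵀ`. -/
theorem product_of_projections_eq
    {n k : ℕ} (s : Fin k → (Fin n → ℝ)) (hs : ∀ i, s i ≠ 0)
    (S : Matrix (Fin n) (Fin k) ℝ) (hS : S = Matrix.of fun i j => s j i)
    (U : Matrix (Fin k) (Fin k) ℝ) (hU : U = upperTriPart (Sᵀ * S))
    (V : Fin k → Matrix (Fin n) (Fin n) ℝ)
    (hV : ∀ i, V i = 1 - (s i ⬝ᵥ s i)⁻¹ • vecMulVec (s i) (s i)) :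
    IsUnit U ∧
    ((List.ofFn V).prod = 1 - S * U⁻¹ * Sᵀ) := by
  have hdet : IsUnit U := by
    rw [Matrix.isUnit_iff_isUnit_det, isUnit_iff_ne_zero]
    have ht : U.BlockTriangular id := by
      intro i j hij
      have h : ¬ i ≤ j := not_le.mpr hij
      simp [hU, upperTriPart, h]
    rw [Matrix.det_of_upperTriangular ht, Finset.prod_ne_zero_iff]
    intro i _ h
    apply hs i
    apply dotProduct_self_eq_zero.mp
    rw [← h, hU, hS]
    simp [upperTriPart, Matrix.mul_apply, dotProduct]
  refine ⟨hdet, ?_⟩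
  obtain ⟨x, hP, hx⟩ := proj_aux n k s hs V hV
  have hUX : U * Matrix.of x = Sᵀ := by
    ext i a
    have := congrFun (hx i) a
    rw [Finset.sum_apply] at this
    simpa [hU, hS, upperTriPart, Matrix.mul_apply, dotProduct] using this
  have hX : U⁻¹ * Sᵀ = Matrix.of x := by
    rw [← hUX, Matrix.nonsing_inv_mul_cancel_left _ _
      ((Matrix.isUnit_iff_isUnit_det _).mp hdet)]
  rw [hP, Matrix.mul_assoc, hX]
  congr 1
  ext a b
  simp [hS, Matrix.mul_apply, Matrix.sum_apply, vecMulVec_apply]
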